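/- arXiv:2106.09156 — 6 statements merged into one kernel-verified Lean document; each statement's English description precedes it below -/
import Mathlib

section
/- Let R be a commutative Noetherian integral domain in which every nonzero prime ideal is maximal (i.e. R has Krull dimension at most 1), let K be its fraction field, and for each maximal ideal 𝔪 let R𝔪^ denote the 𝔪-adic completion of R (the inverse limit of the R/𝔪^s). Set C = ∏_{𝔪 maximal} R𝔪^, a commutative R-algebra with componentwise operations. Then the sequence of R-modules 0 → R → K × C → K ⊗_R C → 0 is exact, where the first map sends r to (the image of r in K, the family of images of r in each R𝔪^), and the second map sends (q, x) to q ⊗ 1 − 1 ⊗ x. In particular R is the pullback of K → K ⊗_R C ← C. -/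
open TensorProduct

noncomputable section

/-- The product of the `𝔪`-adic completions of `R` over all maximal ideals `𝔪`. -/
abbrev AdelicProd (R : Type) [CommRing R] : Type :=
  ∀ 𝔪 : MaximalSpectrum R, AdicCompletion 𝔪.asIdeal R

/-!
Let `s` be a nonzerodivisor of `R` contained only in maximal primes. Then `s` is regular on
`C = ∏ R𝔪^` by flatness, and `R / s → C / s` is bijective: it is injective by Krull's intersection
theorem, and surjective by the Chinese remainder theorem, because `(s)` contains a finite product
of powers of maximal ideals and all factors but `𝔪` itself become trivial in `R𝔪^`.
For any `R`-algebra `C` these properties of the denominators `s` make the square exact: elements of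
`K ⊗ C` are fractions `c / s`, and each of them can be moved into `C` modulo the image of `K`.
-/

section HasseSquare

/-- Exactness of the sequence `0 → R → K × C → K ⊗[R] C → 0` with maps `r ↦ (r, r)` and
`(q, x) ↦ q ⊗ 1 - 1 ⊗ x`, for two algebras `K` and `C` over `R`. -/
structure IsHasseSquare (R K C : Type*) [CommRing R] [CommRing K] [CommRing C] [Algebra R K]
    [Algebra R C] : Prop where
  injective : Function.Injective fun r : R ↦ (algebraMap R K r, algebraMap R C r)
  exact (q : K) (x : C) : q ⊗ₜ[R] (1 : C) - (1 : K) ⊗ₜ[R] x = 0 ↔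
    ∃ r : R, algebraMap R K r = q ∧ algebraMap R C r = x
  surjective (t : K ⊗[R] C) : ∃ (q : K) (x : C), q ⊗ₜ[R] (1 : C) - (1 : K) ⊗ₜ[R] x = t

variable {R K C : Type*} [CommRing R] [CommRing K] [CommRing C] [Algebra R K] [Algebra R C]
  {S : Submonoid R} [IsLocalization S K]

theorem smul_mk'_tmul_one (r : R) (s : S) :
    (s : R) • (IsLocalization.mk' K r s ⊗ₜ[R] (1 : C)) = (1 : K) ⊗ₜ[R] algebraMap R C r := by
  rw [TensorProduct.smul_tmul', IsLocalization.smul_mk'_self,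
    Algebra.TensorProduct.tmul_one_eq_one_tmul]

theorem one_tmul_injective_of_isSMulRegular (hreg : ∀ s ∈ S, IsSMulRegular C s) :
    Function.Injective fun x : C ↦ (1 : K) ⊗ₜ[R] x := by
  intro x y hxy
  obtain ⟨s, hs⟩ := (IsLocalizedModule.eq_iff_exists S (TensorProduct.mk R K C 1)).mp hxy
  exact hreg s s.2 hs

theorem exists_tmul_one_sub_one_tmul_eq
    (hsurj : ∀ s ∈ S, ∀ y : C, ∃ (r : R) (z : C), y = algebraMap R C r + s • z)
    (t : K ⊗[R] C) : ∃ (q : K) (x : C), q ⊗ₜ[R] (1 : C) - (1 : K) ⊗ₜ[R] x = t := by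
  obtain ⟨⟨y, s⟩, hst⟩ := IsLocalizedModule.surj S (TensorProduct.mk R K C 1) t
  obtain ⟨r, z, rfl⟩ := hsurj s s.2 y
  refine ⟨IsLocalization.mk' K r s, -z,
    IsLocalizedModule.smul_injective (TensorProduct.mk R K C 1) s ?_⟩
  calc (s : R) • (IsLocalization.mk' K r s ⊗ₜ[R] (1 : C) - (1 : K) ⊗ₜ[R] (-z))
      = (1 : K) ⊗ₜ[R] algebraMap R C r + (1 : K) ⊗ₜ[R] ((s : R) • z) := by
        rw [TensorProduct.tmul_neg, sub_neg_eq_add, smul_add, smul_mk'_tmul_one,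
          TensorProduct.tmul_smul]
    _ = (s : R) • t := by
        rw [← TensorProduct.tmul_add]
        exact hst.symm

theorem isHasseSquare_of_isLocalization (hS : S ≤ nonZeroDivisors R)
    (hreg : ∀ s ∈ S, IsSMulRegular C s)
    (hinj : ∀ s ∈ S, ∀ (r : R) (x : C), algebraMap R C r = s • x → s ∣ r)
    (hsurj : ∀ s ∈ S, ∀ y : C, ∃ (r : R) (z : C), y = algebraMap R C r + s • z) :
    IsHasseSquare R K C where
  injective _ _ h := IsLocalization.injective K hS (congrArg Prod.fst h)
  exact q x := by
    rw [sub_eq_zero]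
    constructor
    · intro hqx
      obtain ⟨r, s, rfl⟩ := IsLocalization.exists_mk'_eq S q
      have hrx : algebraMap R C r = (s : R) • x :=
        one_tmul_injective_of_isSMulRegular (K := K) hreg <|
          calc (1 : K) ⊗ₜ[R] algebraMap R C r
              = (s : R) • (IsLocalization.mk' K r s ⊗ₜ[R] (1 : C)) := (smul_mk'_tmul_one r s).symm
            _ = (1 : K) ⊗ₜ[R] ((s : R) • x) := by rw [hqx, TensorProduct.tmul_smul]
      obtain ⟨a, rfl⟩ := hinj s s.2 r x hrx
      refine ⟨a, (IsLocalization.mk'_mul_cancel_left a s).symm, hreg s s.2 ?_⟩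
      exact (Algebra.smul_def _ _).trans ((map_mul _ _ _).symm.trans hrx)
    · rintro ⟨r, rfl, rfl⟩
      exact Algebra.TensorProduct.tmul_one_eq_one_tmul r
  surjective := exists_tmul_one_sub_one_tmul_eq hsurj

end HasseSquare

section AdicCompletion

variable {R : Type*} [CommRing R] {I J : Ideal R}

theorem mem_map_algebraMap_adicCompletion_of_evalₐ_eq_zero (hI : I.FG) {n : ℕ}
    {x : AdicCompletion I R} (hx : AdicCompletion.evalₐ I n x = 0) :
    x ∈ (I ^ n).map (algebraMap R (AdicCompletion I R)) := by
  have hker : x ∈ (AdicCompletion.eval I R n).ker := by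
    rw [LinearMap.mem_ker, ← AdicCompletion.factor_evalₐ_eq_eval I x (Ideal.mul_top _).ge, hx,
      map_zero]
  rw [← AdicCompletion.pow_smul_top_eq_ker_eval hI, Ideal.smul_top_eq_map] at hker
  exact hker

theorem mem_sup_pow_of_algebraMap_adicCompletion_mem_map {r : R}
    (hr : algebraMap R (AdicCompletion I R) r ∈ J.map (algebraMap R (AdicCompletion I R)))
    (n : ℕ) : r ∈ J ⊔ I ^ n := by
  rw [← Ideal.mem_quotient_iff_mem_sup]
  have heval := Ideal.mem_map_of_mem (AdicCompletion.evalₐ I n).toRingHom hr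
  rw [Ideal.map_map] at heval
  simpa [AlgHom.comp_algebraMap, AlgHom.commutes] using heval

theorem map_algebraMap_adicCompletion_eq_top (hI : I.FG) (hIJ : IsCoprime I J) :
    J.map (algebraMap R (AdicCompletion I R)) = ⊤ := by
  have := AdicCompletion.isAdicComplete_self I hI
  obtain ⟨i, hi, j, hj, hij⟩ := Ideal.isCoprime_iff_exists.mp hIJ
  refine Ideal.eq_top_of_isUnit_mem _ (Ideal.mem_map_of_mem _ hj)
    (Ideal.isUnit_of_sub_one_mem_jacobson_bot _ (IsAdicComplete.le_jacobson_bot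
      (I.map (algebraMap R (AdicCompletion I R))) ?_))
  rw [← map_one (algebraMap R (AdicCompletion I R)), ← map_sub, ← hij, sub_add_cancel_right]
  exact Ideal.mem_map_of_mem _ (neg_mem hi)

end AdicCompletion

section MaximalIdeals

variable {R : Type*} [CommRing R]

theorem isCoprime_maximal_pow {m m' : MaximalSpectrum R} (hne : m ≠ m') (k n : ℕ) :
    IsCoprime (m.asIdeal ^ k) (m'.asIdeal ^ n) := by
  have := m.isMaximal
  have := m'.isMaximal
  exact (Ideal.isCoprime_of_isMaximal fun h ↦ hne (MaximalSpectrum.ext h)).pow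

variable [IsNoetherianRing R] {J : Ideal R}

theorem eq_zero_of_forall_mem_maximal_pow_smul_top {M : Type*} [AddCommGroup M] [Module R M]
    [Module.Finite R M] {x : M}
    (hx : ∀ (m : Ideal R) [m.IsMaximal] (n : ℕ), x ∈ (m ^ n • ⊤ : Submodule R M)) : x = 0 := by
  by_contra hne
  obtain ⟨m, hm, hle⟩ := Ideal.exists_le_maximal _ (mt (Ideal.torsionOf_eq_top_iff R x).mp hne)
  obtain ⟨⟨s, hs⟩, hsx⟩ :=
    (m.mem_iInf_smul_pow_eq_bot_iff x).mp ((Submodule.mem_iInf _).mpr (hx m))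
  have h1s : 1 - s ∈ m := hle <| by
    rw [Ideal.mem_torsionOf_iff, sub_smul, one_smul, sub_eq_zero]
    exact hsx.symm
  exact hm.ne_top ((Ideal.eq_top_iff_one m).mpr (by simpa using add_mem h1s hs))

theorem mem_of_forall_algebraMap_adicCompletion_mem_map {r : R}
    (hr : ∀ (m : Ideal R) [m.IsMaximal],
      algebraMap R (AdicCompletion m R) r ∈ J.map (algebraMap R (AdicCompletion m R))) :
    r ∈ J := by
  rw [← Ideal.Quotient.eq_zero_iff_mem]
  refine eq_zero_of_forall_mem_maximal_pow_smul_top (R := R) fun m _ n ↦ ?_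
  obtain ⟨j, hj, t, ht, rfl⟩ :=
    Submodule.mem_sup.mp (mem_sup_pow_of_algebraMap_adicCompletion_mem_map (hr m) n)
  have hjt : Ideal.Quotient.mk J (j + t) = t • (1 : R ⧸ J) := by
    rw [map_add, Ideal.Quotient.eq_zero_iff_mem.mpr hj, zero_add, ← Ideal.Quotient.algebraMap_eq,
      Algebra.algebraMap_eq_smul_one]
  rw [hjt]
  exact Submodule.smul_mem_smul ht Submodule.mem_top

theorem exists_finset_prod_maximal_pow_le (hJ : ∀ p : Ideal R, p.IsPrime → J ≤ p → p.IsMaximal) :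
    ∃ (T : Finset (MaximalSpectrum R)) (n : ℕ), ∏ m ∈ T, m.asIdeal ^ n ≤ J := by
  have hfin : (MaximalSpectrum.asIdeal ⁻¹' J.minimalPrimes).Finite :=
    (J.finite_minimalPrimes_of_isNoetherianRing R).preimage
      fun _ _ _ _ h ↦ MaximalSpectrum.ext h
  have hrad : ∏ m ∈ hfin.toFinset, m.asIdeal ≤ J.radical := by
    rw [← J.sInf_minimalPrimes]
    refine le_sInf fun p hp ↦ ?_
    have hmax : p.IsMaximal := hJ p hp.isPrime hp.le
    exact Ideal.prod_le_inf.trans (Finset.inf_le (b := ⟨p, hmax⟩) (hfin.mem_toFinset.mpr hp))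
  obtain ⟨n, hn⟩ := J.exists_radical_pow_le_of_fg J.radical.fg_of_isNoetherianRing
  refine ⟨hfin.toFinset, n, ?_⟩
  rw [Finset.prod_pow]
  exact (Ideal.pow_right_mono hrad n).trans hn

theorem mem_map_prod_maximal_pow_of_evalₐ_eq_zero {T : Finset (MaximalSpectrum R)} {n : ℕ}
    {m : MaximalSpectrum R} {x : AdicCompletion m.asIdeal R}
    (hx : m ∈ T → AdicCompletion.evalₐ m.asIdeal n x = 0) :
    x ∈ (∏ m' ∈ T, m'.asIdeal ^ n).map (algebraMap R (AdicCompletion m.asIdeal R)) := by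
  have hm := m.asIdeal.fg_of_isNoetherianRing
  have hother : ∀ m' ∈ T, m' ≠ m →
      (m'.asIdeal ^ n).map (algebraMap R (AdicCompletion m.asIdeal R)) = 1 := by
    intro m' _ hne
    rw [Ideal.one_eq_top]
    exact map_algebraMap_adicCompletion_eq_top hm
      (by simpa only [pow_one] using isCoprime_maximal_pow hne.symm 1 n)
  rw [← Ideal.mapHom_apply, map_prod]
  simp only [Ideal.mapHom_apply]
  by_cases hmT : m ∈ T
  · rw [Finset.prod_eq_single_of_mem m hmT hother]
    exact mem_map_algebraMap_adicCompletion_of_evalₐ_eq_zero hm (hx hmT)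
  · rw [Finset.prod_eq_one fun m' hm' ↦ hother m' hm' (ne_of_mem_of_not_mem hm' hmT),
      Ideal.one_eq_top]
    exact Submodule.mem_top

theorem exists_forall_sub_algebraMap_adicCompletion_mem_map
    (hJ : ∀ p : Ideal R, p.IsPrime → J ≤ p → p.IsMaximal)
    (y : ∀ m : MaximalSpectrum R, AdicCompletion m.asIdeal R) :
    ∃ r : R, ∀ m, y m - algebraMap R _ r ∈
      J.map (algebraMap R (AdicCompletion m.asIdeal R)) := by
  obtain ⟨T, n, hT⟩ := exists_finset_prod_maximal_pow_le hJ
  obtain ⟨r, hr⟩ := Ideal.pi_quotient_surjective (I := fun m : T ↦ m.1.asIdeal ^ n)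
    (fun m m' hne ↦ isCoprime_maximal_pow (fun h ↦ hne (Subtype.ext h)) n n)
    fun m ↦ AdicCompletion.evalₐ m.1.asIdeal n (y m)
  refine ⟨r, fun m ↦ Ideal.map_mono hT (mem_map_prod_maximal_pow_of_evalₐ_eq_zero fun hm ↦ ?_)⟩
  rw [map_sub, AlgHom.commutes, sub_eq_zero]
  exact (hr ⟨m, hm⟩).symm

/-- Every Noetherian ring of Krull dimension at most one, with its total ring of fractions, is
covered: a nonzerodivisor lies in no minimal prime. -/
theorem adelic_hasse_exact_general (R K : Type*) [CommRing R] [IsNoetherianRing R] [CommRing K]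
    [Algebra R K] (S : Submonoid R) [IsLocalization S K] (hS : S ≤ nonZeroDivisors R)
    (hmax : ∀ s ∈ S, ∀ p : Ideal R, p.IsPrime → s ∈ p → p.IsMaximal) :
    IsHasseSquare R K (∀ 𝔪 : MaximalSpectrum R, AdicCompletion 𝔪.asIdeal R) := by
  refine isHasseSquare_of_isLocalization hS (fun s hs x y hxy ↦ ?_) (fun s _ r x hrx ↦ ?_)
    fun s hs y ↦ ?_
  · exact funext fun 𝔪 ↦ Module.Flat.isSMulRegular_of_nonZeroDivisors (hS hs) (congrFun hxy 𝔪)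
  · rw [← Ideal.mem_span_singleton]
    refine mem_of_forall_algebraMap_adicCompletion_mem_map fun 𝔪 h𝔪 ↦ ?_
    rw [Ideal.map_span, Set.image_singleton, Ideal.mem_span_singleton]
    exact ⟨x ⟨𝔪, h𝔪⟩, (congrFun hrx ⟨𝔪, h𝔪⟩).trans (Algebra.smul_def s (x ⟨𝔪, h𝔪⟩))⟩
  · obtain ⟨r, hr⟩ := exists_forall_sub_algebraMap_adicCompletion_mem_map (J := Ideal.span {s})
      (fun p hp hsp ↦ hmax s hs p hp (hsp (Ideal.mem_span_singleton_self s))) y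
    simp only [Ideal.map_span, Set.image_singleton, Ideal.mem_span_singleton] at hr
    choose z hz using hr
    refine ⟨r, z, funext fun 𝔪 ↦ ?_⟩
    exact (eq_add_of_sub_eq' (hz 𝔪)).trans (congrArg _ (Algebra.smul_def _ _).symm)

end MaximalIdeals

/-- The adelic approximation (Hasse) square for a 1-dimensional Noetherian domain:
the sequence `0 → R → K × ∏ R𝔪^ → K ⊗ ∏ R𝔪^ → 0` is exact. -/
theorem adelic_hasse_exact (R : Type) [CommRing R] [IsDomain R] [IsNoetherianRing R]
    (hdim : ∀ p : Ideal R, p.IsPrime → p ≠ ⊥ → p.IsMaximal) :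
    (Function.Injective fun r : R =>
      ((algebraMap R (FractionRing R) r, algebraMap R (AdelicProd R) r) :
        FractionRing R × AdelicProd R)) ∧
    (∀ (q : FractionRing R) (x : AdelicProd R),
      q ⊗ₜ[R] (1 : AdelicProd R) - (1 : FractionRing R) ⊗ₜ[R] x = 0 ↔
        ∃ r : R, algebraMap R (FractionRing R) r = q ∧ algebraMap R (AdelicProd R) r = x) ∧
    (∀ t : FractionRing R ⊗[R] AdelicProd R,
      ∃ (q : FractionRing R) (x : AdelicProd R),
        q ⊗ₜ[R] (1 : AdelicProd R) - (1 : FractionRing R) ⊗ₜ[R] x = t) := by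
  have h := adelic_hasse_exact_general R (FractionRing R) (nonZeroDivisors R) le_rfl
    fun s hs p hp hsp ↦ hdim p hp (p.ne_bot_iff.mpr ⟨s, hsp, nonZeroDivisors.ne_zero hs⟩)
  exact ⟨h.injective, h.exact, h.surjective⟩
end
end

section
/- The classical Hasse square is a pullback: for every rational number q and every family x = (x_p)_p with x_p ∈ ℤ_p (the p-adic integers, p ranging over all primes), one has q ⊗ 1 = 1 ⊗ x in ℚ ⊗_ℤ (∏_p ℤ_p) if and only if there exists an integer n with (n : ℚ) = q and (n : ℤ_p) = x_p for every prime p. Consequently the commutative square of rings with corners ℤ, ℚ, ∏_p ℤ_p and ℚ ⊗_ℤ ∏_p ℤ_p (the maps out of ℤ being the canonical ones, and the maps into the tensor product being q ↦ q ⊗ 1 and x ↦ 1 ⊗ x) is a pullback square. -/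
/-! If `q = r / m`, then `q ⊗ 1 = 1 ⊗ x` says that `r = m * x` in `∏_p ℤ_p`, because this ring is
torsion-free and hence embeds in its localization `ℚ ⊗ ∏_p ℤ_p`. So `m` divides `r` in every `ℤ_p`,
therefore in `ℤ`, and cancelling `m` leaves an integer equal to both `q` and `x`. -/

open TensorProduct

noncomputable section

instance (p : {p : ℕ // p.Prime}) : Fact p.1.Prime := ⟨p.2⟩

/-- The product of the `p`-adic integers over all primes `p`. -/
abbrev ProdPadicInt : Type := ∀ p : {p : ℕ // p.Prime}, ℤ_[p.1]

section Localization

variable {R S A : Type*} [CommSemiring R] [CommSemiring S] [Algebra R S] [Semiring A] [Algebra R A]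

theorem algebraMap_tmul_one (n : R) :
    algebraMap R S n ⊗ₜ[R] (1 : A) = (1 : S) ⊗ₜ[R] algebraMap R A n := by
  simp only [Algebra.algebraMap_eq_smul_one, smul_tmul]

variable (M : Submonoid R) [IsLocalization M S]

theorem mk'_tmul_one_eq_one_tmul_iff (hreg : ∀ m : M, IsSMulRegular A m) (r : R) (m : M) (x : A) :
    IsLocalization.mk' S r m ⊗ₜ[R] (1 : A) = (1 : S) ⊗ₜ[R] x ↔
      algebraMap R A r = algebraMap R A m * x := by
  have hinj : Function.Injective (TensorProduct.mk R S A 1) :=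
    (IsLocalizedModule.injective_iff_isRegular M _).2 hreg
  have hcancel := IsLocalizedModule.smul_inj (TensorProduct.mk R S A 1) m
  calc
    _ ↔ m • (IsLocalization.mk' S r m ⊗ₜ[R] (1 : A)) = m • ((1 : S) ⊗ₜ[R] x) := (hcancel _ _).symm
    _ ↔ (1 : S) ⊗ₜ[R] algebraMap R A r = (1 : S) ⊗ₜ[R] (algebraMap R A m * x) := by
      rw [Submonoid.smul_def, smul_tmul', IsLocalization.smul_mk'_self, algebraMap_tmul_one,
        Submonoid.smul_def, ← tmul_smul, Algebra.smul_def]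
    _ ↔ _ := hinj.eq_iff

theorem tmul_one_eq_one_tmul_iff_exists_algebraMap (hreg : ∀ m : M, IsSMulRegular A m)
    (hdvd : ∀ (m : M) (r : R), algebraMap R A m ∣ algebraMap R A r → (m : R) ∣ r) (q : S) (x : A) :
    q ⊗ₜ[R] (1 : A) = (1 : S) ⊗ₜ[R] x ↔
      ∃ n : R, algebraMap R S n = q ∧ algebraMap R A n = x := by
  refine ⟨fun h ↦ ?_, ?_⟩
  · obtain ⟨r, m, rfl⟩ := IsLocalization.exists_mk'_eq M q
    have hr : algebraMap R A r = algebraMap R A m * x :=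
      (mk'_tmul_one_eq_one_tmul_iff M hreg r m x).1 h
    obtain ⟨n, rfl⟩ : (m : R) ∣ r := hdvd m r ⟨x, hr⟩
    refine ⟨n, (IsLocalization.mk'_mul_cancel_left n m).symm, hreg m ?_⟩
    simpa [Submonoid.smul_def, Algebra.smul_def] using hr
  · rintro ⟨n, rfl, rfl⟩
    exact algebraMap_tmul_one n

theorem hasse_square_pullback_general [FaithfulSMul R S] (hreg : ∀ m : M, IsSMulRegular A m)
    (hdvd : ∀ (m : M) (r : R), algebraMap R A m ∣ algebraMap R A r → (m : R) ∣ r) :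
    (∀ (q : S) (x : A), q ⊗ₜ[R] (1 : A) = (1 : S) ⊗ₜ[R] x ↔
      ∃ n : R, algebraMap R S n = q ∧ algebraMap R A n = x) ∧
    (∀ (q : S) (x : A), q ⊗ₜ[R] (1 : A) = (1 : S) ⊗ₜ[R] x →
      ∃! n : R, algebraMap R S n = q ∧ algebraMap R A n = x) := by
  have hiff := tmul_one_eq_one_tmul_iff_exists_algebraMap (S := S) M hreg hdvd
  refine ⟨hiff, fun q x h ↦ existsUnique_of_exists_of_unique ((hiff q x).1 h) ?_⟩
  exact fun n n' hn hn' ↦ FaithfulSMul.algebraMap_injective R S (hn.1.trans hn'.1.symm)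

end Localization

theorem int_dvd_of_forall_padicInt_dvd {m n : ℤ}
    (h : ∀ p : {p : ℕ // p.Prime}, (m : ℤ_[p.1]) ∣ n) : m ∣ n := by
  refine Int.natAbs_dvd_natAbs.1 <| (Nat.dvd_iff_prime_pow_dvd_dvd _ _).2 fun p k hp hpm ↦ ?_
  have : Fact p.Prime := ⟨hp⟩
  have hpm' : (p : ℤ_[p]) ^ k ∣ m :=
    (PadicInt.pow_p_dvd_int_iff k m).2 <| by exact_mod_cast Int.natCast_dvd.2 hpm
  have hpn : (p ^ k : ℤ) ∣ n := (PadicInt.pow_p_dvd_int_iff k n).1 <| hpm'.trans (h ⟨p, hp⟩)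
  exact Int.natCast_dvd.1 <| by exact_mod_cast hpn

/-- The classical Hasse square is a pullback: `q ⊗ 1 = 1 ⊗ x` in `ℚ ⊗_ℤ ∏_p ℤ_p`
iff `q` and `x` both come from an integer `n`; moreover such an `n` is then
unique, so `ℤ` is the pullback of `ℚ → ℚ ⊗_ℤ ∏_p ℤ_p ← ∏_p ℤ_p`. -/
theorem hasse_square_pullback :
    (∀ (q : ℚ) (x : ProdPadicInt),
      q ⊗ₜ[ℤ] (1 : ProdPadicInt) = (1 : ℚ) ⊗ₜ[ℤ] x ↔
        ∃ n : ℤ, (n : ℚ) = q ∧ ∀ p : {p : ℕ // p.Prime}, (n : ℤ_[p.1]) = x p) ∧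
    (∀ (q : ℚ) (x : ProdPadicInt),
      q ⊗ₜ[ℤ] (1 : ProdPadicInt) = (1 : ℚ) ⊗ₜ[ℤ] x →
        ∃! n : ℤ, (n : ℚ) = q ∧ ∀ p : {p : ℕ // p.Prime}, (n : ℤ_[p.1]) = x p) := by
  simpa [funext_iff] using hasse_square_pullback_general (S := ℚ) (A := ProdPadicInt)
    (nonZeroDivisors ℤ) (fun m ↦ .of_ne_zero (nonZeroDivisors.ne_zero m.2))
    fun _ _ h ↦ int_dvd_of_forall_padicInt_dvd (pi_dvd_iff.1 h)
end
end

section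
/- Let (R i)_{i ∈ ι} be a family of commutative rings, P = ∏_i R i the product ring, and (N i)_i a family with each N i a module over R i; regard ∏_i N i as a P-module with componentwise action. Then for every index j, the R j-linear map R j ⊗_P (∏_i N i) → N j determined by r ⊗ n ↦ r • (n j) is an isomorphism. (Equivalently, the counit of the adjunction between P-modules and families of R i-modules is an isomorphism, so the product functor is fully faithful.) -/
open TensorProduct

noncomputable section

/-- Each factor `R j` of a product ring `∏ i, R i` is an algebra over the product
via the projection homomorphism. -/
instance instEvalAlgebra {ι : Type} (R : ι → Type) [∀ i, CommRing (R i)] (j : ι) :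
    Algebra (∀ i, R i) (R j) :=
  (Pi.evalRingHom R j).toAlgebra

/-!
Over `P = ∏ i, R i`, every tensor in `R j ⊗[P] ∏ i, N i` has the form `1 ⊗ n`, because `P → R j` is
surjective. The idempotent `e = Pi.single j 1` maps to `1` in `R j`, so `1 ⊗ n = 1 ⊗ e • n`, and
`e • n` depends only on `n j`.
-/

section IsBaseChange

variable {A S M : Type*} [CommSemiring A] [AddCommMonoid M] [Module A M]

theorem one_tmul_smul_of_algebraMap_eq_one [Semiring S] [Algebra A S] {a : A}
    (ha : algebraMap A S a = 1) (m : M) : (1 : S) ⊗ₜ[A] (a • m) = 1 ⊗ₜ m := by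
  rw [← smul_tmul, Algebra.smul_def, ha, mul_one]

variable {N : Type*} [CommSemiring S] [Algebra A S] [AddCommMonoid N] [Module A N] [Module S N]
  [IsScalarTower A S N]

theorem isBaseChange_of_surjective_of_exists_smul_eq_smul {f : M →ₗ[A] N}
    (hS : Function.Surjective (algebraMap A S)) (hf : Function.Surjective f)
    (hfiber : ∀ m m', f m = f m' → ∃ a : A, algebraMap A S a = 1 ∧ a • m = a • m') :
    IsBaseChange S f := by
  have apply_one_tmul (m : M) : f.liftBaseChange S (1 ⊗ₜ m) = f m := by simp
  have one_tmul_surjective := TensorProduct.mk_surjective A M S hS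
  have injective : Function.Injective (f.liftBaseChange S) := by
    intro t t' h
    obtain ⟨m, rfl⟩ := one_tmul_surjective t
    obtain ⟨m', rfl⟩ := one_tmul_surjective t'
    simp only [mk_apply, apply_one_tmul] at h ⊢
    obtain ⟨a, ha, hm⟩ := hfiber m m' h
    rw [← one_tmul_smul_of_algebraMap_eq_one ha m, hm, one_tmul_smul_of_algebraMap_eq_one ha]
  have surjective : Function.Surjective (f.liftBaseChange S) := fun n =>
    let ⟨m, hm⟩ := hf n
    ⟨1 ⊗ₜ m, (apply_one_tmul m).trans hm⟩
  exact .of_equiv (.ofBijective (f.liftBaseChange S) ⟨injective, surjective⟩) apply_one_tmul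

end IsBaseChange

section Pi

variable {ι : Type*} {R N : ι → Type*} {j : ι}

theorem single_smul_eq_single [DecidableEq ι] [∀ i, Zero (R i)] [∀ i, Zero (N i)]
    [∀ i, SMulWithZero (R i) (N i)] (r : R j) (n : ∀ i, N i) :
    (Pi.single j r : ∀ i, R i) • n = Pi.single j (r • n j) := by
  ext i
  obtain rfl | hij := eq_or_ne i j
  · simp
  · simp [hij]

theorem isBaseChange_of_apply_eq_proj [∀ i, CommSemiring (R i)] [∀ i, AddCommMonoid (N i)]
    [∀ i, Module (R i) (N i)] [Algebra (∀ i, R i) (R j)] [Module (∀ i, R i) (N j)]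
    [IsScalarTower (∀ i, R i) (R j) (N j)] {f : (∀ i, N i) →ₗ[∀ i, R i] N j}
    (hR : ∀ p, algebraMap (∀ i, R i) (R j) p = p j) (hf : ∀ n, f n = n j) :
    IsBaseChange (R j) f := by
  classical
  refine isBaseChange_of_surjective_of_exists_smul_eq_smul
    (fun r => ⟨Pi.single j r, by simp [hR]⟩) (fun n => ⟨Pi.single j n, by simp [hf]⟩)
    fun n n' h => ⟨Pi.single j 1, by simp [hR], ?_⟩
  rw [hf, hf] at h
  rw [single_smul_eq_single, h, single_smul_eq_single]

end Pi

theorem base_change_of_product_bijective_general {ι : Type*} (R : ι → Type*)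
    [∀ i, CommSemiring (R i)] (N : ι → Type*) [∀ i, AddCommMonoid (N i)] [∀ i, Module (R i) (N i)]
    (j : ι) [Algebra (∀ i, R i) (R j)] (hR : ∀ p, algebraMap (∀ i, R i) (R j) p = p j) :
    ∃ e : (R j ⊗[∀ i, R i] (∀ i, N i)) →ₗ[R j] N j,
      (∀ (r : R j) (n : ∀ i, N i), e (r ⊗ₜ[∀ i, R i] n) = r • n j) ∧
      Function.Bijective e := by
  let _ : Module (∀ i, R i) (N j) := .compHom (N j) (algebraMap (∀ i, R i) (R j))
  have : IsScalarTower (∀ i, R i) (R j) (N j) := .of_compHom ..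
  let proj : (∀ i, N i) →ₗ[∀ i, R i] N j :=
    { toFun n := n j
      map_add' _ _ := rfl
      map_smul' p n := congrArg (· • n j) (hR p).symm }
  have h : IsBaseChange (R j) proj := isBaseChange_of_apply_eq_proj hR fun _ => rfl
  exact ⟨h.equiv, h.equiv_tmul, h.equiv.bijective⟩

/-- The counit of the adjunction between `∏ i, R i`-modules and families of
`R i`-modules is an isomorphism: for any family `(N i)` of `R i`-modules and any
index `j`, the map `R j ⊗_{∏ i, R i} ∏ i, N i → N j`, `r ⊗ n ↦ r • n j`, is
bijective. -/
theorem base_change_of_product_bijective {ι : Type} (R : ι → Type) [∀ i, CommRing (R i)]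
    (N : ι → Type) [∀ i, AddCommGroup (N i)] [∀ i, Module (R i) (N i)] (j : ι) :
    ∃ e : (R j ⊗[∀ i, R i] (∀ i, N i)) →ₗ[R j] N j,
      (∀ (r : R j) (n : ∀ i, N i), e (r ⊗ₜ[∀ i, R i] n) = r • n j) ∧
      Function.Bijective e :=
  base_change_of_product_bijective_general R N j fun _ => rfl
end
end

section
/- Let V, N, Q be categories, h : N ⥤ Q a functor, and v : V ⥤ Q a functor admitting a right adjoint; assume V has pullbacks. Let S denote the category of sections of the cospan, i.e. the comma category Comma(v × h, Δ_Q) of the functor V × N ⥤ Q × Q, (u,n) ↦ (v(u), h(n)), over the diagonal Q ⥤ Q × Q; its objects are tuples (u, n, q, α : v(u) → q, β : h(n) → q). Then the functor ι : Comma(v, h) ⥤ S sending (u, n, f : v(u) → h(n)) to (u, n, h(n), f, id_{h(n)}) is fully faithful and admits a right adjoint (quasi-coherification: it sends (u, n, q, α, β) to (u', n, f') where u' is the pullback in V of the adjunct u → vʳ(q) of α along vʳ(β) : vʳ(h(n)) → vʳ(q), and f' is the adjunct of the projection u' → vʳ(h(n))). -/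
open CategoryTheory

universe v₁ v₂ v₃ u₁ u₂ u₃

variable {V : Type u₁} {N : Type u₂} {Q : Type u₃}
  [Category.{v₁} V] [Category.{v₂} N] [Category.{v₃} Q]

/-- The inclusion of the quasi-coherent sections `Comma(v, h)` into the category
of all sections of the cospan `N ⥤ Q ⥢ V`, sending `(u, n, f : v(u) → h(n))` to
`(u, n, h(n), f, id)`. -/
def qcSectionsIncl (v : V ⥤ Q) (h : N ⥤ Q) :
    Comma v h ⥤ Comma (v.prod h) (Functor.diag Q) where
  obj X :=
    { left := (X.left, X.right)
      right := h.obj X.right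
      hom := (X.hom, 𝟙 (h.obj X.right)) }
  map {X Y} f :=
    { left := (f.left, f.right)
      right := h.map f.right
      w := by
        apply Prod.ext
        · simp
        · simp }

/-!
A morphism from `ι(u', n', f)` to a section `(u, n, q, α, β)` is a pair `a : u' ⟶ u`, `b : n' ⟶ n`
with `v(a) ≫ α = f ≫ h(b) ≫ β`. If `β` is an identity, this is a morphism of `Comma v h`, so `ι` is
fully faithful. In general, `v ⊣ r` turns the equation into the statement that `a` followed by the
adjunct of `α` is the adjunct of `f ≫ h(b)` followed by `r(β)`. Such a pair is therefore the same as
`b` together with a morphism from `u'` to the pullback whose second component is the adjunct of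
`f ≫ h(b)`, which is a morphism of `Comma v h` into the quasi-coherification.
-/

open Limits

namespace qcSectionsIncl

section Hom

variable {v : V ⥤ Q} {h : N ⥤ Q} {X : Comma v h} {Y : Comma (v.prod h) (Functor.diag Q)}

/-- The structure map `α : v(u) ⟶ q` of a section `(u, n, q, α, β)`. -/
abbrev vLeg (Y : Comma (v.prod h) (Functor.diag Q)) : v.obj Y.left.1 ⟶ Y.right := Y.hom.1

/-- The structure map `β : h(n) ⟶ q` of a section `(u, n, q, α, β)`. -/
abbrev hLeg (Y : Comma (v.prod h) (Functor.diag Q)) : h.obj Y.left.2 ⟶ Y.right := Y.hom.2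

/-- The component in `V` of a morphism from a quasi-coherent section to a section. -/
abbrev homFst (f : (qcSectionsIncl v h).obj X ⟶ Y) : X.left ⟶ Y.left.1 := f.left.1

/-- The component in `N` of a morphism from a quasi-coherent section to a section. -/
abbrev homSnd (f : (qcSectionsIncl v h).obj X ⟶ Y) : X.right ⟶ Y.left.2 := f.left.2

theorem hom_right (f : (qcSectionsIncl v h).obj X ⟶ Y) :
    f.right = h.map (homSnd f) ≫ hLeg Y :=
  ((congrArg Prod.snd f.w).trans (Category.id_comp f.right)).symm

theorem map_homFst_comp_vLeg (f : (qcSectionsIncl v h).obj X ⟶ Y) :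
    v.map (homFst f) ≫ vLeg Y = X.hom ≫ h.map (homSnd f) ≫ hLeg Y := by
  rw [← hom_right]
  exact congrArg Prod.fst f.w

theorem hom_ext {f g : (qcSectionsIncl v h).obj X ⟶ Y}
    (hV : homFst f = homFst g) (hN : homSnd f = homSnd g) : f = g :=
  CommaMorphism.ext (Prod.ext hV hN) (by rw [hom_right f, hom_right g, hN])

/-- A morphism from a quasi-coherent section to a section, given by its components in `V` and `N`;
its component in `Q` is forced. -/
def homMk (a : X.left ⟶ Y.left.1) (b : X.right ⟶ Y.left.2)
    (w : v.map a ≫ vLeg Y = X.hom ≫ h.map b ≫ hLeg Y) : (qcSectionsIncl v h).obj X ⟶ Y where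
  left := (a, b)
  right := h.map b ≫ hLeg Y
  w := Prod.ext w (Category.id_comp _).symm

variable (v h) in
/-- The inclusion of the quasi-coherent sections is fully faithful. -/
def fullyFaithful : (qcSectionsIncl v h).FullyFaithful where
  preimage {X Y} f :=
    { left := homFst f
      right := homSnd f
      w := (map_homFst_comp_vLeg f).trans (congrArg (X.hom ≫ ·) (Category.comp_id _)) }
  map_preimage f := hom_ext rfl rfl

end Hom

section Coherification

variable {v : V ⥤ Q} {h : N ⥤ Q} {r : Q ⥤ V} (adj : v ⊣ r)

section Obj

variable {X : Comma v h} (Y : Comma (v.prod h) (Functor.diag Q))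
  [HasPullback (adj.homEquiv _ _ (vLeg Y)) (r.map (hLeg Y))]

/-- The quasi-coherification of a section `(u, n, q, α, β)`: its component in `V` is the pullback
of the adjunct of `α` along `r(β)`. Reducible, so that `rw` sees through the components. -/
noncomputable abbrev coherificationObj : Comma v h where
  left := pullback (adj.homEquiv _ _ (vLeg Y)) (r.map (hLeg Y))
  right := Y.left.2
  hom := (adj.homEquiv _ _).symm (pullback.snd _ _)

/-- The universal morphism from the quasi-coherification of a section to that section. -/
noncomputable def fromCoherification :
    (qcSectionsIncl v h).obj (coherificationObj adj Y) ⟶ Y :=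
  homMk (pullback.fst _ _) (𝟙 _) <| by
    rw [h.map_id, Category.id_comp, ← adj.homEquiv_naturality_left_square_iff,
      Equiv.apply_symm_apply, pullback.condition]

variable {Y}

theorem homEquiv_hom_comp_map_right (g : X ⟶ coherificationObj adj Y) :
    adj.homEquiv _ _ (X.hom ≫ h.map g.right) = g.left ≫ pullback.snd _ _ := by
  rw [← g.w, adj.homEquiv_naturality_left, Equiv.apply_symm_apply]

/-- The morphism to the quasi-coherification of `Y` induced by a morphism to `Y`. -/
noncomputable def toCoherification (f : (qcSectionsIncl v h).obj X ⟶ Y) :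
    X ⟶ coherificationObj adj Y where
  left := pullback.lift (homFst f) (adj.homEquiv _ _ (X.hom ≫ h.map (homSnd f))) <| by
    rw [adj.homEquiv_naturality_left_square_iff, map_homFst_comp_vLeg, Category.assoc]
  right := homSnd f
  w := by
    rw [← adj.homEquiv_naturality_left_symm, pullback.lift_snd, Equiv.symm_apply_apply]

theorem map_toCoherification_comp (f : (qcSectionsIncl v h).obj X ⟶ Y) :
    (qcSectionsIncl v h).map (toCoherification adj f) ≫ fromCoherification adj Y = f :=
  hom_ext (pullback.lift_fst _ _ _) (Category.comp_id _)

theorem coherificationObj_hom_ext {g g' : X ⟶ coherificationObj adj Y}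
    (w : (qcSectionsIncl v h).map g ≫ fromCoherification adj Y =
      (qcSectionsIncl v h).map g' ≫ fromCoherification adj Y) : g = g' := by
  have hV : g.left ≫ pullback.fst _ _ = g'.left ≫ pullback.fst _ _ := congrArg homFst w
  have hN : g.right = g'.right :=
    (Category.comp_id _).symm.trans ((congrArg homSnd w).trans (Category.comp_id _))
  refine CommaMorphism.ext (pullback.hom_ext hV ?_) hN
  rw [← homEquiv_hom_comp_map_right, ← homEquiv_hom_comp_map_right, hN]

/-- The universal property of the quasi-coherification of `Y`. -/
noncomputable def coherificationHomEquiv :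
    ((qcSectionsIncl v h).obj X ⟶ Y) ≃ (X ⟶ coherificationObj adj Y) where
  toFun := toCoherification adj
  invFun g := (qcSectionsIncl v h).map g ≫ fromCoherification adj Y
  left_inv := map_toCoherification_comp adj
  right_inv _ := coherificationObj_hom_ext adj (map_toCoherification_comp adj _)

theorem coherificationHomEquiv_naturality_left {X' : Comma v h} (f : X' ⟶ X)
    (g : (qcSectionsIncl v h).obj X ⟶ Y) :
    coherificationHomEquiv adj ((qcSectionsIncl v h).map f ≫ g) =
      f ≫ coherificationHomEquiv adj g := by
  rw [← Equiv.eq_symm_apply]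
  change _ = (qcSectionsIncl v h).map (f ≫ toCoherification adj g) ≫ fromCoherification adj Y
  rw [Functor.map_comp, Category.assoc, map_toCoherification_comp]

end Obj

variable [∀ {n : N} {q : Q} (β : h.obj n ⟶ q), HasPullbacksAlong (r.map β)]

/-- Quasi-coherification as a functor from sections to quasi-coherent sections. -/
noncomputable def coherification : Comma (v.prod h) (Functor.diag Q) ⥤ Comma v h :=
  Adjunction.rightAdjointOfEquiv (fun _ _ => coherificationHomEquiv adj)
    fun _ _ _ => coherificationHomEquiv_naturality_left adj

/-- Quasi-coherification is right adjoint to the inclusion of the quasi-coherent sections. -/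
noncomputable def adjunction : qcSectionsIncl v h ⊣ coherification adj :=
  Adjunction.adjunctionOfEquivRight (fun _ _ => coherificationHomEquiv adj)
    fun _ _ _ => coherificationHomEquiv_naturality_left adj

end Coherification

end qcSectionsIncl

theorem qcSectionsIncl_fullyFaithful_isLeftAdjoint_general {v : V ⥤ Q} {h : N ⥤ Q} {r : Q ⥤ V}
    (adj : v ⊣ r) [∀ {n : N} {q : Q} (β : h.obj n ⟶ q), HasPullbacksAlong (r.map β)] :
    (qcSectionsIncl v h).Full ∧ (qcSectionsIncl v h).Faithful ∧
      (qcSectionsIncl v h).IsLeftAdjoint :=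
  ⟨(qcSectionsIncl.fullyFaithful v h).full, (qcSectionsIncl.fullyFaithful v h).faithful,
    (qcSectionsIncl.adjunction adj).isLeftAdjoint⟩

/-- Quasi-coherification: if `v` admits a right adjoint and `V` has pullbacks,
then the inclusion of the quasi-coherent sections into all sections of the
cospan is fully faithful and admits a right adjoint. -/
theorem qcSectionsIncl_fullyFaithful_isLeftAdjoint (v : V ⥤ Q) (h : N ⥤ Q)
    [v.IsLeftAdjoint] [Limits.HasPullbacks V] :
    (qcSectionsIncl v h).Full ∧ (qcSectionsIncl v h).Faithful ∧
      (qcSectionsIncl v h).IsLeftAdjoint :=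
  qcSectionsIncl_fullyFaithful_isLeftAdjoint_general (Adjunction.ofIsLeftAdjoint v)
end

section
/- Let V, N, Q be categories, v : V ⥤ Q a functor, and h : N ⥤ Q a functor admitting a right adjoint; assume N has pullbacks. Let S denote the category of sections of the cospan, i.e. the comma category Comma(v × h, Δ_Q) of the functor V × N ⥤ Q × Q, (u,n) ↦ (v(u), h(n)), over the diagonal Q ⥤ Q × Q; its objects are tuples (u, n, q, α : v(u) → q, β : h(n) → q). Then the functor Comma(h, v) ⥤ S sending (n, u, g : h(n) → v(u)) to (u, n, v(u), id_{v(u)}, g) is fully faithful and admits a right adjoint (extendification: it sends (u, n, q, α, β) to (n', u, g') where n' is the pullback in N of the adjunct n → hʳ(q) of β along hʳ(α) : hʳ(v(u)) → hʳ(q)). -/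
/-!
Since the first structure map of an extended section is an identity, a morphism from
`(n, u, g)` to a section `(u', n', q, α, β)` is a pair `a : u ⟶ u'`, `b : n ⟶ n'` with
`h(b) ≫ β = g ≫ v(a) ≫ α`. This gives full faithfulness at once, by taking `α` to be an identity.
If `h ⊣ r`, the condition transposes to `b ≫ β♭ = (g ≫ v(a))♭ ≫ r(α)`: for fixed `a`, the
admissible `b` correspond to the morphisms into the pullback of `β♭` along `r(α)` whose second
component is `(g ≫ v(a))♭`, which are exactly the morphisms over `a` into the extendification.
-/

open CategoryTheory

universe v₁ v₂ v₃ u₁ u₂ u₃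

variable {V : Type u₁} {N : Type u₂} {Q : Type u₃}
  [Category.{v₁} V] [Category.{v₂} N] [Category.{v₃} Q]

/-- The inclusion of the extended sections `Comma(h, v)` into the category of
all sections of the cospan `N ⥤ Q ⥢ V`, sending `(n, u, g : h(n) → v(u))` to
`(u, n, v(u), id, g)`. -/
def extSectionsIncl (v : V ⥤ Q) (h : N ⥤ Q) :
    Comma h v ⥤ Comma (v.prod h) (Functor.diag Q) where
  obj X :=
    { left := (X.right, X.left)
      right := v.obj X.right
      hom := (𝟙 (v.obj X.right), X.hom) }
  map {X Y} f :=
    { left := (f.right, f.left)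
      right := v.map f.right
      w := by
        apply Prod.ext
        · simp
        · simp }

namespace extSectionsIncl

open Limits

section Hom

variable {v : V ⥤ Q} {h : N ⥤ Q} {X : Comma h v} {Y : Comma (v.prod h) (Functor.diag Q)}

variable (Y) in
/-- The structure map `α : v(u) ⟶ q` of a section `(u, n, q, α, β)`, with its type unfolded from
the product category. -/
def homV : v.obj Y.left.1 ⟶ Y.right := Y.hom.1

variable (Y) in
/-- The structure map `β : h(n) ⟶ q` of a section `(u, n, q, α, β)`, with its type unfolded from
the product category. -/
def homN : h.obj Y.left.2 ⟶ Y.right := Y.hom.2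

/-- The component in `V` of a morphism from an extended section to a section. -/
def leftV (f : (extSectionsIncl v h).obj X ⟶ Y) : X.right ⟶ Y.left.1 := f.left.1

/-- The component in `N` of a morphism from an extended section to a section. -/
def leftN (f : (extSectionsIncl v h).obj X ⟶ Y) : X.left ⟶ Y.left.2 := f.left.2

lemma right_eq (f : (extSectionsIncl v h).obj X ⟶ Y) :
    f.right = v.map (leftV f) ≫ homV Y :=
  (Category.id_comp _).symm.trans (congrArg Prod.fst f.w).symm

lemma map_leftN_comp_homN (f : (extSectionsIncl v h).obj X ⟶ Y) :
    h.map (leftN f) ≫ homN Y = (X.hom ≫ v.map (leftV f)) ≫ homV Y := by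
  have w : h.map (leftN f) ≫ homN Y = X.hom ≫ f.right := congrArg Prod.snd f.w
  rw [w, right_eq, Category.assoc]

lemma hom_ext {f g : (extSectionsIncl v h).obj X ⟶ Y} (hV : leftV f = leftV g)
    (hN : leftN f = leftN g) : f = g :=
  Comma.hom_ext _ _ (Prod.ext hV hN) (by rw [right_eq, right_eq, hV])

variable (v h) in
/-- Full faithfulness of the inclusion of extended sections, with the preimage of a morphism given
by its components in `N` and `V`. -/
def fullyFaithful : (extSectionsIncl v h).FullyFaithful where
  preimage f :=
    { left := leftN f
      right := leftV f
      w := (map_leftN_comp_homN f).trans (Category.comp_id _) }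
  map_preimage _ := hom_ext rfl rfl

end Hom

section Extendification

variable {v : V ⥤ Q} {h : N ⥤ Q} {r : Q ⥤ N} (adj : h ⊣ r) [HasPullbacks N]
  {X : Comma h v} {Y : Comma (v.prod h) (Functor.diag Q)}

variable (Y) in
/-- The extendification of a section `(u, n, q, α, β)`: its component in `N` is the pullback of
the adjunct of `β` along `r(α)`. -/
noncomputable def extendificationObj : Comma h v where
  left := pullback (adj.homEquiv _ _ (homN Y)) (r.map (homV Y))
  right := Y.left.1
  hom := (adj.homEquiv _ _).symm (pullback.snd _ _)

variable (Y) in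
/-- The projection from the component in `N` of the extendification of a section to the component
in `N` of that section. -/
noncomputable def extendificationFst : (extendificationObj adj Y).left ⟶ Y.left.2 :=
  pullback.fst _ _

variable (Y) in
lemma isPullback_extendificationFst :
    IsPullback (extendificationFst adj Y) (adj.homEquiv _ _ (extendificationObj adj Y).hom)
      (adj.homEquiv _ _ (homN Y)) (r.map (homV Y)) := by
  have snd_eq : adj.homEquiv _ _ (extendificationObj adj Y).hom = pullback.snd _ _ :=
    Equiv.apply_symm_apply _ _
  rw [snd_eq]
  exact IsPullback.of_hasPullback _ _

lemma extendificationObj_hom_ext {f g : X ⟶ extendificationObj adj Y} (hV : f.right = g.right)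
    (hN : f.left ≫ extendificationFst adj Y = g.left ≫ extendificationFst adj Y) : f = g := by
  refine Comma.hom_ext _ _ ((isPullback_extendificationFst adj Y).hom_ext hN ?_) hV
  rw [← adj.homEquiv_naturality_left, ← adj.homEquiv_naturality_left, f.w, g.w, hV]

variable (Y) in
/-- The canonical morphism from the extendification of a section to that section. It is the
component at that section of the counit of the adjunction. -/
noncomputable def extendificationCounit :
    (extSectionsIncl v h).obj (extendificationObj adj Y) ⟶ Y where
  left := (𝟙 _, extendificationFst adj Y)
  right := homV Y
  w := Prod.ext (congrArg (· ≫ homV Y) (v.map_id _)) <|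
    (adj.homEquiv_naturality_left_square_iff _ _ _ _).mp (isPullback_extendificationFst adj Y).w

/-- The factorization of a morphism from an extended section through the extendification of its
target. -/
noncomputable def extendificationLift (f : (extSectionsIncl v h).obj X ⟶ Y) :
    X ⟶ extendificationObj adj Y where
  left := (isPullback_extendificationFst adj Y).lift (leftN f)
    (adj.homEquiv _ _ (X.hom ≫ v.map (leftV f)))
    (adj.homEquiv_naturality_left_square _ _ _ _ (map_leftN_comp_homN f))
  right := leftV f
  w := (adj.homEquiv _ _).injective <| by
    rw [adj.homEquiv_naturality_left, IsPullback.lift_snd]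

lemma extendificationLift_left_comp_fst (f : (extSectionsIncl v h).obj X ⟶ Y) :
    (extendificationLift adj f).left ≫ extendificationFst adj Y = leftN f :=
  IsPullback.lift_fst _ _ _ _

variable (X Y) in
/-- The universal property of the extendification: morphisms from an extended section to a section
correspond to morphisms to its extendification. -/
noncomputable def extendificationHomEquiv :
    ((extSectionsIncl v h).obj X ⟶ Y) ≃ (X ⟶ extendificationObj adj Y) where
  toFun := extendificationLift adj
  invFun g := (extSectionsIncl v h).map g ≫ extendificationCounit adj Y
  left_inv f := hom_ext (Category.comp_id _) (extendificationLift_left_comp_fst adj f)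
  right_inv _ := extendificationObj_hom_ext adj (Category.comp_id _)
    (extendificationLift_left_comp_fst adj _)

lemma extendificationHomEquiv_naturality_left {X' : Comma h v} (f : X' ⟶ X)
    (g : (extSectionsIncl v h).obj X ⟶ Y) :
    extendificationHomEquiv adj X' Y ((extSectionsIncl v h).map f ≫ g) =
      f ≫ extendificationHomEquiv adj X Y g := by
  refine extendificationObj_hom_ext adj rfl ?_
  calc
    (extendificationLift adj ((extSectionsIncl v h).map f ≫ g)).left ≫ extendificationFst adj Y =
        f.left ≫ leftN g := extendificationLift_left_comp_fst adj _
    _ = f.left ≫ (extendificationLift adj g).left ≫ extendificationFst adj Y := by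
      rw [extendificationLift_left_comp_fst]
    _ = (f ≫ extendificationLift adj g).left ≫ extendificationFst adj Y :=
      (Category.assoc _ _ _).symm

/-- Extendification as a functor from sections to extended sections. -/
noncomputable def extendification : Comma (v.prod h) (Functor.diag Q) ⥤ Comma h v :=
  Adjunction.rightAdjointOfEquiv (extendificationHomEquiv adj)
    fun _ _ _ => extendificationHomEquiv_naturality_left adj

/-- Extendification is right adjoint to the inclusion of extended sections. -/
noncomputable def adjunction : extSectionsIncl v h ⊣ extendification adj :=
  Adjunction.adjunctionOfEquivRight (extendificationHomEquiv adj)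
    fun _ _ _ => extendificationHomEquiv_naturality_left adj

end Extendification

end extSectionsIncl

/-- Extendification: if `h` admits a right adjoint and `N` has pullbacks, then
the inclusion of the extended sections into all sections of the cospan is fully
faithful and admits a right adjoint. -/
theorem extSectionsIncl_fullyFaithful_isLeftAdjoint (v : V ⥤ Q) (h : N ⥤ Q)
    [h.IsLeftAdjoint] [Limits.HasPullbacks N] :
    (extSectionsIncl v h).Full ∧ (extSectionsIncl v h).Faithful ∧
      (extSectionsIncl v h).IsLeftAdjoint := by
  obtain ⟨r, ⟨adj⟩⟩ := Functor.IsLeftAdjoint.exists_rightAdjoint (left := h)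
  have fullyFaithful := extSectionsIncl.fullyFaithful v h
  exact ⟨fullyFaithful.full, fullyFaithful.faithful, (extSectionsIncl.adjunction adj).isLeftAdjoint⟩
end

section
/- Let k be a field of characteristic 2 and let E = C₂ × C₂ be the Klein four-group. Then for every natural number n, the group cohomology H^n(E; k) of E with coefficients in the trivial representation k is a finite-dimensional k-vector space of dimension n + 1. (This is the additive content of the isomorphism of graded rings H^•(E; k) ≅ k[u, v] with u, v in degree 1.) -/
noncomputable section

/-- The Klein four-group `C₂ × C₂` (written multiplicatively). -/
abbrev KleinFour : Type := Multiplicative (ZMod 2) × Multiplicative (ZMod 2)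

/-!
Let `|K| = 2` and let `A` be a representation of `H` with `2A = 0`. Inflating `A` to `H × K` and
coinducing it gives a short exact sequence `0 → A → coind A → A → 0` of representations of `H × K`,
whose second map sums over `K`. By Shapiro's lemma `Hⁿ(H × K, coind A) ≅ Hⁿ(H, A)`, and inflation
along `H × K → H` splits the map `Hⁿ(H × K, A) → Hⁿ(H, A)`. The long exact sequence thus breaks up
into isomorphisms `Hⁿ⁺¹(H × K, A) ≅ Hⁿ(H × K, A) × Hⁿ⁺¹(H, A)`. With `H` trivial this gives
`Hⁿ(C₂, k) ≅ k`, and then with `H = C₂` it gives `Hⁿ(E, k) ≅ kⁿ⁺¹`.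
-/

open CategoryTheory groupCohomology Rep

universe u

section LongExactSequence

variable {k G : Type u} [CommRing k] [Group G] {X : ShortComplex (Rep.{u} k G)}

lemma injective_δ_of_surjective_map (hX : X.ShortExact) (n : ℕ)
    (hf : Function.Surjective (groupCohomology.map (.id G) X.f n).hom) :
    Function.Injective (δ hX n (n + 1) rfl).hom := by
  have exact_map_map := (ShortComplex.ShortExact.moduleCat_exact_iff_function_exact _).1
    (mapShortComplex₂_exact hX n)
  have exact_map_δ := (ShortComplex.ShortExact.moduleCat_exact_iff_function_exact _).1
    (mapShortComplex₃_exact hX (Eq.refl (n + 1)))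
  rw [injective_iff_map_eq_zero]
  intro x hx
  obtain ⟨y, rfl⟩ := (exact_map_δ x).1 hx
  obtain ⟨z, rfl⟩ := hf y
  exact exact_map_map.apply_apply_eq_zero z

lemma nonempty_groupCohomology_succ_equiv_prod (hX : X.ShortExact)
    (s : ∀ n, groupCohomology X.X₂ n ⟶ groupCohomology X.X₁ n)
    (hs : ∀ n, s n ≫ groupCohomology.map (.id G) X.f n = 𝟙 _) (n : ℕ) :
    Nonempty (groupCohomology X.X₁ (n + 1) ≃ₗ[k]
      groupCohomology X.X₃ n × groupCohomology X.X₂ (n + 1)) := by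
  have exact_δ_map : Function.Exact (δ hX n (n + 1) rfl).hom
      (groupCohomology.map (.id G) X.f (n + 1)).hom :=
    (ShortComplex.ShortExact.moduleCat_exact_iff_function_exact _).1 (mapShortComplex₁_exact hX rfl)
  have injective_δ : Function.Injective (δ hX n (n + 1) rfl).hom :=
    injective_δ_of_surjective_map hX n fun y =>
      ⟨(s n).hom y, LinearMap.congr_fun (congrArg ModuleCat.Hom.hom (hs n)) y⟩
  exact ⟨(exact_δ_map.splitSurjectiveEquiv injective_δ
    ⟨(s (n + 1)).hom, congrArg ModuleCat.Hom.hom (hs (n + 1))⟩).1⟩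

end LongExactSequence

section Shapiro

variable {k G H : Type u} [CommRing k] [Group G] [Group H] (φ : H →* G) (A : Rep.{u} k H)

lemma coindV_range_subtype (hφ : Function.Injective φ) :
    Representation.coindV φ.range.subtype (res (φ.ofInjective hφ).symm.toMonoidHom A).ρ =
      Representation.coindV φ A.ρ := by
  ext F
  simp only [Representation.mem_coindV, (φ.ofInjective hφ).surjective.forall,
    Subgroup.subtype_apply, MonoidHom.ofInjective_apply]
  simp

/-- Coinduction along an injective homomorphism agrees with coinduction from its range, which is
the case covered by `groupCohomology.coindIso`. -/
def coindRangeIso (hφ : Function.Injective φ) :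
    coind φ.range.subtype (res (φ.ofInjective hφ).symm.toMonoidHom A) ≅ coind φ A :=
  Rep.mkIso <| .mk (LinearEquiv.ofEq _ _ (coindV_range_subtype φ A hφ)) fun _ => rfl

/-- Shapiro's lemma for coinduction along an injective homomorphism. -/
def shapiroIso (hφ : Function.Injective φ) (n : ℕ) :
    groupCohomology (coind φ A) n ≅ groupCohomology A n :=
  (functor k G n).mapIso (coindRangeIso φ A hφ).symm ≪≫ groupCohomology.coindIso _ n ≪≫
    groupCohomology.mapIso (φ.ofInjective hφ).symm (.refl k A.V) (fun _ => rfl) n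

/-- The canonical map of Shapiro's lemma: restriction along `φ` followed by the map on coefficients
given by the counit `F ↦ F 1`. -/
abbrev shapiroMap (n : ℕ) : groupCohomology (coind φ A) n ⟶ groupCohomology A n :=
  groupCohomology.map φ ((resCoindAdjunction k φ).counit.app A) n

/-- Inflation in group cohomology along a homomorphism `r`, which need not be surjective. -/
abbrev inflation (r : G →* H) (n : ℕ) : groupCohomology A n ⟶ groupCohomology (res r A) n :=
  groupCohomology.map r (𝟙 _) n

variable {φ} {r : G →* H} (hr : r.comp φ = .id H)

/-- For a retraction `r` of `φ`, the unit `res r A ⟶ coind φ (res φ (res r A))`, with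
`res φ (res r A)` identified with `A`. -/
def coindUnit : res r A ⟶ coind φ A :=
  resCoindHomEquiv φ (res r A) A <| Rep.ofHom
    { toLinearMap := .id
      isIntertwining' := fun h => LinearMap.ext fun a =>
        congrArg (A.ρ · a) (DFunLike.congr_fun hr h) }

lemma coindUnit_apply (a : A) (g : G) : ((coindUnit A hr).hom a).1 g = A.ρ (r g) a := rfl

lemma coindUnit_apply_of_eq_one (a : A) {g : G} (hg : r g = 1) :
    ((coindUnit A hr).hom a).1 g = a := by
  rw [coindUnit_apply, hg, map_one, Module.End.one_apply]

lemma coindUnit_injective : Function.Injective (coindUnit A hr).hom := fun a b h => by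
  rw [← coindUnit_apply_of_eq_one A hr a (map_one r), h,
    coindUnit_apply_of_eq_one A hr b (map_one r)]

lemma inflation_comp_map_coindUnit_comp_shapiroMap (n : ℕ) :
    inflation A r n ≫ groupCohomology.map (.id G) (coindUnit A hr) n ≫ shapiroMap φ A n = 𝟙 _ := by
  rw [← groupCohomology.map_comp, ← groupCohomology.map_comp, ← groupCohomology.map_id]
  refine groupCohomology.map_congr hr ?_ n
  ext a
  exact coindUnit_apply_of_eq_one A hr a (map_one r)

include hr

lemma shapiroMap_surjective (n : ℕ) : Function.Surjective (shapiroMap φ A n).hom := fun x =>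
  ⟨_, LinearMap.congr_fun
    (congrArg ModuleCat.Hom.hom (inflation_comp_map_coindUnit_comp_shapiroMap A hr n)) x⟩

-- Orzech: a surjection between isomorphic finite modules is injective, so there is no need to
-- compare `shapiroMap` with the isomorphism constructed in `shapiroIso`.
lemma shapiroMap_injective (n : ℕ) [Module.Finite k (groupCohomology A n)] :
    Function.Injective (shapiroMap φ A n).hom := by
  have hφ : Function.Injective φ := Function.LeftInverse.injective (DFunLike.congr_fun hr)
  let e := (shapiroIso φ A hφ n).toLinearEquiv
  exact OrzechProperty.injective_of_surjective_of_injective e.toLinearMap _ e.injective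
    (shapiroMap_surjective A hr n)

lemma shapiroMap_comp_inflation_comp_map_coindUnit (n : ℕ)
    [Module.Finite k (groupCohomology A n)] :
    (shapiroMap φ A n ≫ inflation A r n) ≫ groupCohomology.map (.id G) (coindUnit A hr) n =
      𝟙 _ := by
  have := (ModuleCat.mono_iff_injective _).2 (shapiroMap_injective A hr n)
  rw [← cancel_mono (shapiroMap φ A n), Category.assoc, Category.assoc,
    inflation_comp_map_coindUnit_comp_shapiroMap, Category.comp_id, Category.id_comp]

end Shapiro

section Product

variable {k H K : Type u} [CommRing k] [Group H] [Group K] (A : Rep.{u} k H)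

lemma coind_inl_apply (F : coind (.inl H K) A) (h : H) (c : K) :
    F.1 (h, c) = A.ρ h (F.1 (1, c)) := by
  simpa using F.2 h (1, c)

variable [Fintype K]

/-- The norm map from the coinduced to the inflated representation of `H × K`: summation over the
factor `K`. -/
def coindNorm : coind (.inl H K) A ⟶ res (.fst H K) A :=
  Rep.ofHom
    { toFun := fun F => ∑ c, F.1 (1, c)
      map_add' := fun _ _ => Finset.sum_add_distrib
      map_smul' := fun x F => (Finset.smul_sum (r := x) (f := fun c => F.1 (1, c))).symm
      isIntertwining' := fun g => by
        ext F
        change ∑ c, F.1 ((1, c) * g) = A.ρ g.1 (∑ c, F.1 (1, c))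
        simp only [map_sum, ← coind_inl_apply]
        exact Fintype.sum_equiv (Equiv.mulRight g.2) _ _ fun c => by simp [Prod.mul_def] }

lemma coindNorm_apply (F : coind (.inl H K) A) : (coindNorm A).hom F = ∑ c, F.1 (1, c) := rfl

lemma coindNorm_surjective : Function.Surjective (coindNorm (K := K) A).hom := by
  classical
  intro a
  refine ⟨⟨fun g => if g.2 = 1 then A.ρ g.1 a else 0, fun h g => ?_⟩, ?_⟩
  · dsimp only
    split_ifs <;> simp_all
  · change ∑ c : K, (if c = 1 then A.ρ 1 a else 0) = a
    simp

lemma coindNorm_coindUnit (a : A) :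
    (coindNorm A).hom ((coindUnit A (MonoidHom.fst_comp_inl (N := K))).hom a) =
      Fintype.card K • a := by
  rw [coindNorm_apply, ← Finset.card_univ, ← Finset.sum_const]
  exact Finset.sum_congr rfl fun c _ =>
    coindUnit_apply_of_eq_one A MonoidHom.fst_comp_inl a (g := ((1, c) : H × K)) rfl

variable {A} (hK : Fintype.card K = 2) (hA : ∀ a : A, a + a = 0)

include hK hA

lemma coindUnit_comp_coindNorm :
    coindUnit A MonoidHom.fst_comp_inl ≫ coindNorm (K := K) A = 0 := by
  ext a
  have h : Fintype.card K • a = 0 := by rw [hK, two_nsmul, hA]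
  exact (coindNorm_coindUnit A a).trans h

/-- The complex `A ⟶ coind A ⟶ A` of representations of `H × K`, where `A` is inflated from `H`
and coinduced from `H` to `H × K`. -/
abbrev coindShortComplex : ShortComplex (Rep.{u} k (H × K)) :=
  .mk (coindUnit A MonoidHom.fst_comp_inl) (coindNorm A) (coindUnit_comp_coindNorm hK hA)

lemma apply_eq_apply_one_of_coindNorm_eq_zero {F : coind (.inl H K) A}
    (hF : (coindNorm A).hom F = 0) (c : K) : F.1 (1, c) = F.1 1 := by
  classical
  by_cases hc : c = 1
  · rw [hc, Prod.mk_one_one]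
  have huniv : {1, c} = Finset.univ :=
    Finset.eq_univ_of_card _ (by rw [Finset.card_pair (Ne.symm hc), hK])
  rw [coindNorm_apply, ← huniv, Finset.sum_pair (Ne.symm hc)] at hF
  rw [eq_neg_of_add_eq_zero_right hF]
  exact neg_eq_of_add_eq_zero_left (hA _)

lemma coindShortComplex_shortExact : (coindShortComplex hK hA).ShortExact where
  exact := by
    apply (forget₂ _ (ModuleCat k)).reflects_exact_of_faithful
    rw [ShortComplex.moduleCat_exact_iff]
    intro (F : coind (.inl H K) A) hF
    refine ⟨F.1 1, Subtype.ext <| funext fun g => ?_⟩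
    calc A.ρ g.1 (F.1 1)
      _ = A.ρ g.1 (F.1 (1, g.2)) := by rw [apply_eq_apply_one_of_coindNorm_eq_zero hK hA hF]
      _ = F.1 g := (coind_inl_apply A F g.1 g.2).symm
  mono_f := (Rep.mono_iff_injective _).2 (coindUnit_injective A MonoidHom.fst_comp_inl)
  epi_g := (Rep.epi_iff_surjective _).2 (coindNorm_surjective A)

lemma nonempty_groupCohomology_prod_succ_equiv [∀ n, Module.Finite k (groupCohomology A n)]
    (n : ℕ) :
    Nonempty (groupCohomology (res (.fst H K) A) (n + 1) ≃ₗ[k]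
      groupCohomology (res (.fst H K) A) n × groupCohomology A (n + 1)) := by
  obtain ⟨e⟩ := nonempty_groupCohomology_succ_equiv_prod (coindShortComplex_shortExact hK hA)
    (fun i => shapiroMap (.inl H K) A i ≫ inflation A (.fst H K) i)
    (fun i => shapiroMap_comp_inflation_comp_map_coindUnit A MonoidHom.fst_comp_inl i) n
  exact ⟨e ≪≫ₗ .prodCongr (.refl k _)
    (shapiroIso (.inl H K) A (Prod.mk_left_injective 1) (n + 1)).toLinearEquiv⟩

end Product

lemma subsingleton_groupCohomology_succ {k G : Type u} [CommRing k] [Group G] [Subsingleton G]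
    (A : Rep.{u} k G) (n : ℕ) : Subsingleton (groupCohomology A (n + 1)) :=
  ModuleCat.subsingleton_of_isZero (isZero_groupCohomology_succ_of_subsingleton A n)

lemma finite_groupCohomology_trivial {k G : Type u} [CommRing k] [Group G] [Subsingleton G]
    (n : ℕ) : Module.Finite k (groupCohomology (Rep.trivial k G k) n) := by
  cases n with
  | zero => exact .equiv (H0IsoOfIsTrivial (Rep.trivial k G k)).toLinearEquiv.symm
  | succ n =>
    have := subsingleton_groupCohomology_succ (Rep.trivial k G k) n
    infer_instance

section CharTwo

variable (k : Type) [CommRing k] [CharP k 2]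

lemma nonempty_groupCohomology_zmod_two_equiv (n : ℕ) :
    Nonempty (groupCohomology (Rep.trivial k (Multiplicative (ZMod 2)) k) n ≃ₗ[k] k) := by
  have := finite_groupCohomology_trivial (k := k) (G := PUnit)
  let e (i : ℕ) : groupCohomology (Rep.trivial k (PUnit × Multiplicative (ZMod 2)) k) i ≃ₗ[k]
      groupCohomology (Rep.trivial k (Multiplicative (ZMod 2)) k) i :=
    (groupCohomology.mapIso MulEquiv.uniqueProd (.refl k k) (fun _ => rfl) i).toLinearEquiv
  induction n with
  | zero => exact ⟨(H0IsoOfIsTrivial (Rep.trivial k (Multiplicative (ZMod 2)) k)).toLinearEquiv⟩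
  | succ n ih =>
    obtain ⟨f⟩ := nonempty_groupCohomology_prod_succ_equiv (A := Rep.trivial k PUnit k)
      (K := Multiplicative (ZMod 2)) rfl CharTwo.add_self_eq_zero n
    obtain ⟨g⟩ := ih
    have := subsingleton_groupCohomology_succ (Rep.trivial k PUnit k) n
    let := uniqueOfSubsingleton (0 : groupCohomology (Rep.trivial k PUnit k) (n + 1))
    exact ⟨(e (n + 1)).symm ≪≫ₗ f ≪≫ₗ .prodUnique ≪≫ₗ e n ≪≫ₗ g⟩

theorem kleinFour_groupCohomology_finrank_general (n : ℕ) :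
    Nonempty (groupCohomology (Rep.trivial k KleinFour k) n ≃ₗ[k] (Fin (n + 1) → k)) := by
  have (i : ℕ) : Module.Finite k
      (groupCohomology (Rep.trivial k (Multiplicative (ZMod 2)) k) i) :=
    .equiv (nonempty_groupCohomology_zmod_two_equiv k i).some.symm
  induction n with
  | zero =>
    exact ⟨(H0IsoOfIsTrivial (Rep.trivial k KleinFour k)).toLinearEquiv ≪≫ₗ
      (LinearEquiv.funUnique (Fin 1) k k).symm⟩
  | succ n ih =>
    obtain ⟨f⟩ := nonempty_groupCohomology_prod_succ_equiv
      (A := Rep.trivial k (Multiplicative (ZMod 2)) k) (K := Multiplicative (ZMod 2)) rfl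
      CharTwo.add_self_eq_zero n
    obtain ⟨g⟩ := ih
    obtain ⟨h⟩ := nonempty_groupCohomology_zmod_two_equiv k (n + 1)
    exact ⟨f ≪≫ₗ .prodComm k _ _ ≪≫ₗ .prodCongr h g ≪≫ₗ Fin.consLinearEquiv k fun _ => k⟩

end CharTwo

/-- For a field `k` of characteristic 2 and the Klein four-group `E`, the group
cohomology `H^n(E; k)` with trivial coefficients has `k`-dimension `n + 1`
(the additive content of `H^•(E; k) ≅ k[u, v]`). -/
theorem kleinFour_groupCohomology_finrank (k : Type) [Field k] [CharP k 2] (n : ℕ) :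
    FiniteDimensional k (groupCohomology (Rep.trivial k KleinFour k) n) ∧
    Module.finrank k (groupCohomology (Rep.trivial k KleinFour k) n) = n + 1 := by
  obtain ⟨e⟩ := kleinFour_groupCohomology_finrank_general k n
  exact ⟨.equiv e.symm, e.finrank_eq.trans (Module.finrank_fin_fun k)⟩
end
end
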